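/- For every integer d ≥ 2 there exists a d×d unitary matrix Q such that for every d²×d² complex matrix M, (1/(d!·3^d)²) · Σ_{g ∈ G} Σ_{h ∈ G} ((Q g Q† h)^{⊗2}) M ((Q g Q† h)^{⊗2})† = ∫_{U(d)} U^{⊗2} M (U^{⊗2})† dμ_U(U); that is, in every dimension d ≥ 2 the product G^Q · G forms a generalized group unitary 2-design. -/

import Mathlib

/-!
Write `T_G` for the average of `M ↦ (g ⊗ g) M (g ⊗ g)ᴴ` over the monomial group `G`. It projects
onto the commutant of `{g ⊗ g}`, which is spanned by the identity, the flip and the projection `Δ`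
onto the span of the `e_i ⊗ e_i` (`exists_coeffs_of_invariant`): only one dimension more than the
commutant of all `U ⊗ U`. The average over `G^Q · G` is `T_{G^Q} ∘ T_G`, and since the Haar twirl
satisfies `T_U = T_U ∘ T_G` and all twirls fix the identity and the flip, it equals the Haar twirl as
soon as both agree on `Δ`. The three traces of `T_G` of the conjugate of `Δ` against the identity, the
flip and `Δ` show that `T_{G^Q} Δ = (1 + flip) / (d + 1)` when `∑ |Q i k|⁴ = 2d / (d + 1)`
(`groupTwirl_conj2_diagProj`); right invariance of Haar measure then gives `T_U Δ` the same value,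
so no Haar integral is computed.

A unitary with this fourth moment comes from the intermediate value theorem
(`exists_unitary_fourth_moment`): the Hartley matrix `H` is a real symmetric involution, so
`√(1-s) I + i √s H` is unitary for `s ∈ [0, 1]`. Its squared entries are
`(1-s) δ_{jk} + s H_{jk}²`, and the fourth moment moves continuously from `d` to
`∑ H_{jk}⁴ ≤ 1 + (d-1)/(2d) ≤ 2d / (d + 1)`.
-/

open Matrix MeasureTheory
open scoped Kronecker Real

/-- `ζ = exp(2πi/3)`, the principal cube root of unity. -/
noncomputable def zeta : ℂ := Complex.exp (2 * π * Complex.I / 3)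

/-- The monomial matrix determined by a permutation `σ` and phases `α`:
`g i k = ζ^{α k}` if `i = σ k` and `0` otherwise.  As `(σ, α)` ranges over
`S_d × (ℤ/3ℤ)^d`, these are exactly the `d!·3^d` elements of the image of the
natural representation of `G(3,1,d)`. -/
noncomputable def gmat {d : ℕ} (σ : Equiv.Perm (Fin d)) (α : Fin d → ZMod 3) :
    Matrix (Fin d) (Fin d) ℂ :=
  fun i k => if i = σ k then zeta ^ (α k).val else 0

noncomputable instance (d : ℕ) : MeasurableSpace (Matrix.unitaryGroup (Fin d) ℂ) :=
  borel _

/-! ### Right invariance of Haar measure -/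

instance (d : ℕ) : BorelSpace (Matrix.unitaryGroup (Fin d) ℂ) := ⟨rfl⟩

instance compactSpace_unitaryGroup (d : ℕ) : CompactSpace (Matrix.unitaryGroup (Fin d) ℂ) := by
  refine (isCompact_iff_compactSpace
    (s := (unitary (Matrix (Fin d) (Fin d) ℂ) : Set (Matrix (Fin d) (Fin d) ℂ)))).mp ?_
  refine IsCompact.of_isClosed_subset
    (s := Set.univ.pi fun _ => Set.univ.pi fun _ => Metric.closedBall (0 : ℂ) 1)
    (isCompact_univ_pi fun _ => isCompact_univ_pi fun _ => isCompact_closedBall _ _) ?_ ?_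
  · exact isClosed_unitary (R := Matrix (Fin d) (Fin d) ℂ)
  · intro U hU i _ j _
    simpa using entry_norm_bound_of_unitary hU i j

/-- A translate of the Haar probability measure is again a Haar probability measure, so uniqueness
makes the measure right-invariant. -/
theorem integral_mul_right_unitary {d : ℕ} (μ : Measure (Matrix.unitaryGroup (Fin d) ℂ))
    [μ.IsHaarMeasure] [IsProbabilityMeasure μ] (f : Matrix.unitaryGroup (Fin d) ℂ → ℂ)
    (V : Matrix.unitaryGroup (Fin d) ℂ) : ∫ U, f (U * V) ∂μ = ∫ U, f U ∂μ := by
  have : μ.IsMulRightInvariant := by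
    constructor
    intro V
    have h : IsProbabilityMeasure (μ.map (· * V)) :=
      Measure.isProbabilityMeasure_map (by fun_prop)
    exact Measure.isHaarMeasure_eq_of_isProbabilityMeasure _ _
  exact integral_mul_right_eq_self f V

/-! ### Conjugation by tensor squares, the flip and the diagonal projection -/

/-- Conjugation by `A ⊗ A`, as a linear map in the matrix being conjugated. -/
noncomputable def conj2 {d : ℕ} (A : Matrix (Fin d) (Fin d) ℂ) :
    Matrix (Fin d × Fin d) (Fin d × Fin d) ℂ →ₗ[ℂ] Matrix (Fin d × Fin d) (Fin d × Fin d) ℂ where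
  toFun M := (A ⊗ₖ A) * M * (A ⊗ₖ A)ᴴ
  map_add' M N := by rw [mul_add, add_mul]
  map_smul' c M := by simp

theorem conj2_apply {d : ℕ} (A : Matrix (Fin d) (Fin d) ℂ)
    (M : Matrix (Fin d × Fin d) (Fin d × Fin d) ℂ) :
    conj2 A M = (A ⊗ₖ A) * M * (A ⊗ₖ A)ᴴ := rfl

theorem conj2_mul {d : ℕ} (A B : Matrix (Fin d) (Fin d) ℂ)
    (M : Matrix (Fin d × Fin d) (Fin d × Fin d) ℂ) :
    conj2 (A * B) M = conj2 A (conj2 B M) := by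
  simp only [conj2_apply, mul_kronecker_mul, conjTranspose_mul, Matrix.mul_assoc]

theorem kronecker_self_mul_conjTranspose {d : ℕ} {A : Matrix (Fin d) (Fin d) ℂ}
    (hA : A ∈ Matrix.unitaryGroup (Fin d) ℂ) : (A ⊗ₖ A) * (A ⊗ₖ A)ᴴ = 1 := by
  have := mem_unitaryGroup_iff.mp hA
  rw [star_eq_conjTranspose] at this
  rw [conjTranspose_kronecker, ← mul_kronecker_mul, this, one_kronecker_one]

theorem kronecker_self_conjTranspose_mul {d : ℕ} {A : Matrix (Fin d) (Fin d) ℂ}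
    (hA : A ∈ Matrix.unitaryGroup (Fin d) ℂ) : (A ⊗ₖ A)ᴴ * (A ⊗ₖ A) = 1 := by
  have := mem_unitaryGroup_iff'.mp hA
  rw [star_eq_conjTranspose] at this
  rw [conjTranspose_kronecker, ← mul_kronecker_mul, this, one_kronecker_one]

theorem conj2_of_commute {d : ℕ} {A : Matrix (Fin d) (Fin d) ℂ}
    (hA : A ∈ Matrix.unitaryGroup (Fin d) ℂ) {X : Matrix (Fin d × Fin d) (Fin d × Fin d) ℂ}
    (hX : (A ⊗ₖ A) * X = X * (A ⊗ₖ A)) : conj2 A X = X := by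
  rw [conj2_apply, hX, Matrix.mul_assoc, kronecker_self_mul_conjTranspose hA, Matrix.mul_one]

theorem trace_mul_conj2 {d : ℕ} {A : Matrix (Fin d) (Fin d) ℂ}
    (hA : A ∈ Matrix.unitaryGroup (Fin d) ℂ) {X : Matrix (Fin d × Fin d) (Fin d × Fin d) ℂ}
    (hX : (A ⊗ₖ A) * X = X * (A ⊗ₖ A)) (M : Matrix (Fin d × Fin d) (Fin d × Fin d) ℂ) :
    trace (X * conj2 A M) = trace (X * M) := by
  rw [conj2_apply, ← Matrix.mul_assoc, ← Matrix.mul_assoc, ← hX, Matrix.trace_mul_comm,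
    ← Matrix.mul_assoc, ← Matrix.mul_assoc, kronecker_self_conjTranspose_mul hA, Matrix.one_mul]

/-- The flip operator on `ℂ^d ⊗ ℂ^d`, exchanging the two tensor factors. -/
noncomputable def flipMat (d : ℕ) : Matrix (Fin d × Fin d) (Fin d × Fin d) ℂ :=
  fun p q => if p.1 = q.2 ∧ p.2 = q.1 then 1 else 0

/-- The orthogonal projection of `ℂ^d ⊗ ℂ^d` onto the span of the vectors `e_i ⊗ e_i`. -/
noncomputable def diagProj (d : ℕ) : Matrix (Fin d × Fin d) (Fin d × Fin d) ℂ :=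
  fun p q => if p = q ∧ p.1 = p.2 then 1 else 0

theorem mul_flipMat_apply {d : ℕ} (X : Matrix (Fin d × Fin d) (Fin d × Fin d) ℂ)
    (p q : Fin d × Fin d) : (X * flipMat d) p q = X p q.swap := by
  rw [Matrix.mul_apply, Finset.sum_eq_single q.swap]
  · simp [flipMat]
  · rintro ⟨a, b⟩ - h
    simp only [flipMat]
    rw [if_neg, mul_zero]
    rintro ⟨rfl, rfl⟩
    exact h rfl
  · simp

theorem flipMat_mul_apply {d : ℕ} (X : Matrix (Fin d × Fin d) (Fin d × Fin d) ℂ)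
    (p q : Fin d × Fin d) : (flipMat d * X) p q = X p.swap q := by
  rw [Matrix.mul_apply, Finset.sum_eq_single p.swap]
  · simp [flipMat]
  · rintro ⟨a, b⟩ - h
    simp only [flipMat]
    rw [if_neg, zero_mul]
    rintro ⟨h1, h2⟩
    exact h (by simp [Prod.swap, h1, h2])
  · simp

theorem mul_diagProj_apply {d : ℕ} (X : Matrix (Fin d × Fin d) (Fin d × Fin d) ℂ)
    (p q : Fin d × Fin d) : (X * diagProj d) p q = if q.1 = q.2 then X p q else 0 := by
  rw [Matrix.mul_apply, Finset.sum_eq_single q]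
  · simp [diagProj]
  · intro b _ h
    simp [diagProj, h]
  · simp

theorem diagProj_mul_apply {d : ℕ} (X : Matrix (Fin d × Fin d) (Fin d × Fin d) ℂ)
    (p q : Fin d × Fin d) : (diagProj d * X) p q = if p.1 = p.2 then X p q else 0 := by
  rw [Matrix.mul_apply, Finset.sum_eq_single p]
  · simp [diagProj]
  · intro b _ h
    simp [diagProj, h.symm]
  · simp

theorem flipMat_comm {d : ℕ} (A : Matrix (Fin d) (Fin d) ℂ) :
    (A ⊗ₖ A) * flipMat d = flipMat d * (A ⊗ₖ A) := by
  ext p q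
  rw [mul_flipMat_apply, flipMat_mul_apply]
  simp [kroneckerMap_apply, mul_comm]

theorem diagProj_comm {d : ℕ} (σ : Equiv.Perm (Fin d)) (α : Fin d → ZMod 3) :
    (gmat σ α ⊗ₖ gmat σ α) * diagProj d = diagProj d * (gmat σ α ⊗ₖ gmat σ α) := by
  ext ⟨i, j⟩ ⟨k, l⟩
  rw [mul_diagProj_apply, diagProj_mul_apply]
  simp only [kroneckerMap_apply, gmat]
  by_cases h1 : i = σ k
  · by_cases h2 : j = σ l
    · simp [h1, h2]
    · simp [h2]
  · simp [h1]

/-! ### The monomial group and its commutant -/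

theorem isPrimitiveRoot_zeta : IsPrimitiveRoot zeta 3 := by
  simpa [zeta] using Complex.isPrimitiveRoot_exp 3 (by norm_num)

theorem zeta_pow_val_add (a b : ZMod 3) :
    zeta ^ (a + b).val = zeta ^ a.val * zeta ^ b.val := by
  rw [ZMod.val_add, ← pow_add]
  conv_rhs => rw [← Nat.mod_add_div (a.val + b.val) 3, pow_add, pow_mul,
    isPrimitiveRoot_zeta.pow_eq_one, one_pow, mul_one]

theorem zeta_pow_val_injective {a b : ZMod 3} (h : zeta ^ a.val = zeta ^ b.val) : a = b :=
  ZMod.val_injective 3 (isPrimitiveRoot_zeta.pow_inj (ZMod.val_lt a) (ZMod.val_lt b) h)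

theorem gmat_mul {d : ℕ} (τ σ : Equiv.Perm (Fin d)) (β α : Fin d → ZMod 3) :
    gmat τ β * gmat σ α = gmat (τ * σ) (fun k => β (σ k) + α k) := by
  ext i k
  rw [Matrix.mul_apply, Finset.sum_eq_single (σ k)]
  · simp only [gmat, Equiv.Perm.mul_apply, zeta_pow_val_add]
    by_cases h : i = τ (σ k) <;> simp [h]
  · intro b _ h
    simp [gmat, h]
  · simp

theorem gmat_mem {d : ℕ} (σ : Equiv.Perm (Fin d)) (α : Fin d → ZMod 3) :
    gmat σ α ∈ Matrix.unitaryGroup (Fin d) ℂ := by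
  rw [mem_unitaryGroup_iff']
  ext k l
  rw [Matrix.mul_apply, Finset.sum_eq_single (σ k)]
  · by_cases h : k = l
    · subst h
      have hz : ‖zeta‖ = 1 :=
        Complex.norm_eq_one_of_pow_eq_one isPrimitiveRoot_zeta.pow_eq_one (by norm_num)
      simp [star_apply, gmat, ← mul_pow, ← Complex.normSq_eq_conj_mul_self,
        Complex.normSq_eq_norm_sq, hz]
    · simp [gmat, h]
  · intro b _ h
    simp [star_apply, gmat, h]
  · simp

/-- The twirl over the monomial group: the average of conjugation by `g ⊗ g` over `g ∈ G`. -/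
noncomputable def groupTwirl (d : ℕ) :
    Matrix (Fin d × Fin d) (Fin d × Fin d) ℂ →ₗ[ℂ] Matrix (Fin d × Fin d) (Fin d × Fin d) ℂ :=
  (1 / ((Nat.factorial d : ℂ) * 3 ^ d)) •
    ∑ σ : Equiv.Perm (Fin d), ∑ α : Fin d → ZMod 3, conj2 (gmat σ α)

theorem groupTwirl_apply {d : ℕ} (M : Matrix (Fin d × Fin d) (Fin d × Fin d) ℂ) :
    groupTwirl d M = (1 / ((Nat.factorial d : ℂ) * 3 ^ d)) •
      ∑ σ : Equiv.Perm (Fin d), ∑ α : Fin d → ZMod 3, conj2 (gmat σ α) M := by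
  simp [groupTwirl, LinearMap.sum_apply]

theorem conj2_groupTwirl {d : ℕ} (τ : Equiv.Perm (Fin d)) (β : Fin d → ZMod 3)
    (M : Matrix (Fin d × Fin d) (Fin d × Fin d) ℂ) :
    conj2 (gmat τ β) (groupTwirl d M) = groupTwirl d M := by
  simp only [groupTwirl_apply, map_smul, map_sum, ← conj2_mul, gmat_mul]
  congr 1
  refine Fintype.sum_equiv (Equiv.mulLeft τ) _ _ fun σ => ?_
  refine Fintype.sum_equiv (Equiv.addLeft (fun k => β (σ k))) _ _ fun α => ?_
  rfl

/-- The weights of the twirl sum to one, so a linear map that does not see the conjugation by any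
`g ⊗ g` does not see the twirl either. Applied below to traces, the identity and the Haar twirl. -/
theorem map_groupTwirl_of_invariant {d : ℕ} {E : Type*} [AddCommGroup E] [Module ℂ E]
    (f : Matrix (Fin d × Fin d) (Fin d × Fin d) ℂ →ₗ[ℂ] E)
    (M : Matrix (Fin d × Fin d) (Fin d × Fin d) ℂ)
    (hf : ∀ σ α, f (conj2 (gmat σ α) M) = f M) : f (groupTwirl d M) = f M := by
  have hne : (Nat.factorial d : ℂ) * 3 ^ d ≠ 0 :=
    mul_ne_zero (by exact_mod_cast Nat.factorial_ne_zero d) (pow_ne_zero _ (by norm_num))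
  simp only [groupTwirl_apply, map_smul, map_sum, hf, Finset.sum_const, Finset.card_univ,
    Fintype.card_perm, Fintype.card_fin, Fintype.card_fun, ZMod.card, ← Nat.cast_smul_eq_nsmul ℂ,
    smul_smul]
  rw [Nat.cast_pow, Nat.cast_ofNat, one_div, inv_mul_cancel₀ hne, one_smul]

theorem gmat_kronecker_mul_apply {d : ℕ} (σ : Equiv.Perm (Fin d)) (α : Fin d → ZMod 3)
    (N : Matrix (Fin d × Fin d) (Fin d × Fin d) ℂ) (i j : Fin d) (q : Fin d × Fin d) :
    ((gmat σ α ⊗ₖ gmat σ α) * N) (σ i, σ j) q = zeta ^ (α i + α j).val * N (i, j) q := by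
  rw [Matrix.mul_apply, Finset.sum_eq_single (i, j)]
  · simp [gmat, zeta_pow_val_add]
  · rintro ⟨a, b⟩ - h
    have : ¬ (i = a ∧ j = b) := by rintro ⟨rfl, rfl⟩; exact h rfl
    by_cases h1 : i = a
    · simp [gmat, show j ≠ b from fun h2 => this ⟨h1, h2⟩]
    · simp [gmat, h1]
  · simp

theorem mul_gmat_kronecker_apply {d : ℕ} (σ : Equiv.Perm (Fin d)) (α : Fin d → ZMod 3)
    (N : Matrix (Fin d × Fin d) (Fin d × Fin d) ℂ) (p : Fin d × Fin d) (k l : Fin d) :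
    (N * (gmat σ α ⊗ₖ gmat σ α)) p (k, l) = N p (σ k, σ l) * zeta ^ (α k + α l).val := by
  rw [Matrix.mul_apply, Finset.sum_eq_single (σ k, σ l)]
  · simp [gmat, zeta_pow_val_add]
  · rintro ⟨a, b⟩ - h
    have : ¬ (a = σ k ∧ b = σ l) := by rintro ⟨rfl, rfl⟩; exact h rfl
    by_cases h1 : a = σ k
    · simp [gmat, show b ≠ σ l from fun h2 => this ⟨h1, h2⟩]
    · simp [gmat, h1]
  · simp

theorem exists_perm_apply_pair {d : ℕ} {a b i j : Fin d} (hab : a ≠ b) (hij : i ≠ j) :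
    ∃ σ : Equiv.Perm (Fin d), σ a = i ∧ σ b = j := by
  refine ⟨Equiv.swap (Equiv.swap a i b) j * Equiv.swap a i, ?_, ?_⟩
  · rw [Equiv.Perm.mul_apply, Equiv.swap_apply_left]
    refine Equiv.swap_apply_of_ne_of_ne (fun h => hab ?_) hij
    exact (Equiv.swap a i).injective (by rw [Equiv.swap_apply_left, ← h])
  · rw [Equiv.Perm.mul_apply, Equiv.swap_apply_left]

/-- The weights of the diagonal elements of `G` on `e_i ⊗ e_j` separate the multisets `{i, j}`.
This is where the order `3` of the phases matters: modulo `2` all `e_i ⊗ e_i` would have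
weight zero. -/
theorem eq_or_eq_of_phase {d : ℕ} {i j k l : Fin d}
    (h : ∀ α : Fin d → ZMod 3, α i + α j = α k + α l) : (i = k ∧ j = l) ∨ (i = l ∧ j = k) := by
  have key : ∀ m n : Fin d, (∀ α : Fin d → ZMod 3, α m = α n) → m = n := by
    intro m n hmn
    by_contra hne
    have := hmn (Pi.single m 1)
    rw [Pi.single_eq_same, Pi.single_eq_of_ne (Ne.symm hne)] at this
    exact absurd this (by decide)
  by_cases hik : i = k
  · subst hik
    exact Or.inl ⟨rfl, key _ _ fun α => add_left_cancel (h α)⟩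
  by_cases hil : i = l
  · subst hil
    exact Or.inr ⟨rfl, key _ _ fun α => add_left_cancel ((h α).trans (add_comm _ _))⟩
  have := h (Pi.single i 1)
  rw [Pi.single_eq_same, Pi.single_eq_of_ne (Ne.symm hik), Pi.single_eq_of_ne (Ne.symm hil),
    Pi.single_apply] at this
  split_ifs at this <;> exact absurd this (by decide)

/-- The commutant of `{g ⊗ g : g ∈ G}` is spanned by the identity, the flip and the diagonal
projection: diagonal elements kill all other entries, and permutations act transitively on each of
the three classes of entries that survive. -/
theorem exists_coeffs_of_invariant {d : ℕ} (hd : 2 ≤ d)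
    {N : Matrix (Fin d × Fin d) (Fin d × Fin d) ℂ}
    (hN : ∀ σ α, conj2 (gmat σ α) N = N) :
    ∃ a b e : ℂ, N = a • (1 : Matrix (Fin d × Fin d) (Fin d × Fin d) ℂ) + b • flipMat d
      + e • diagProj d := by
  have hcomm : ∀ σ α, (gmat σ α ⊗ₖ gmat σ α) * N = N * (gmat σ α ⊗ₖ gmat σ α) := by
    intro σ α
    have h := congrArg (· * (gmat σ α ⊗ₖ gmat σ α)) (hN σ α)
    simpa only [conj2_apply, Matrix.mul_assoc, kronecker_self_conjTranspose_mul (gmat_mem σ α),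
      Matrix.mul_one] using h
  have hent : ∀ (σ : Equiv.Perm (Fin d)) (α : Fin d → ZMod 3) (i j k l : Fin d),
      zeta ^ (α i + α j).val * N (i, j) (k, l)
        = N (σ i, σ j) (σ k, σ l) * zeta ^ (α k + α l).val := by
    intro σ α i j k l
    rw [← gmat_kronecker_mul_apply σ α N i j (k, l), hcomm, mul_gmat_kronecker_apply]
  have hperm : ∀ (σ : Equiv.Perm (Fin d)) (i j k l : Fin d),
      N (σ i, σ j) (σ k, σ l) = N (i, j) (k, l) := by
    intro σ i j k l
    simpa using (hent σ 0 i j k l).symm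
  have hzero : ∀ i j k l : Fin d, ¬ ((i = k ∧ j = l) ∨ (i = l ∧ j = k)) →
      N (i, j) (k, l) = 0 := by
    intro i j k l h
    by_contra hne
    refine h (eq_or_eq_of_phase fun α => zeta_pow_val_injective ?_)
    have := hent 1 α i j k l
    rw [mul_comm] at this
    exact mul_left_cancel₀ hne this
  let i₀ : Fin d := ⟨0, by omega⟩
  let i₁ : Fin d := ⟨1, by omega⟩
  have h01 : i₀ ≠ i₁ := by simp [i₀, i₁]
  have hdiag : ∀ i, N (i, i) (i, i) = N (i₀, i₀) (i₀, i₀) := by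
    intro i
    have := hperm (Equiv.swap i₀ i) i₀ i₀ i₀ i₀
    rwa [Equiv.swap_apply_left] at this
  have hid : ∀ i j, i ≠ j → N (i, j) (i, j) = N (i₀, i₁) (i₀, i₁) := by
    intro i j hij
    obtain ⟨σ, rfl, rfl⟩ := exists_perm_apply_pair h01 hij
    exact hperm ..
  have hflip : ∀ i j, i ≠ j → N (i, j) (j, i) = N (i₀, i₁) (i₁, i₀) := by
    intro i j hij
    obtain ⟨σ, rfl, rfl⟩ := exists_perm_apply_pair h01 hij
    exact hperm ..
  refine ⟨N (i₀, i₁) (i₀, i₁), N (i₀, i₁) (i₁, i₀), N (i₀, i₀) (i₀, i₀) - N (i₀, i₁) (i₀, i₁)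
    - N (i₀, i₁) (i₁, i₀), ?_⟩
  ext ⟨i, j⟩ ⟨k, l⟩
  simp only [Matrix.add_apply, Matrix.smul_apply, Matrix.one_apply, flipMat, diagProj,
    Prod.mk.injEq, smul_eq_mul]
  by_cases h1 : i = k ∧ j = l
  · obtain ⟨rfl, rfl⟩ := h1
    by_cases hij : i = j
    · subst hij
      rw [hdiag]
      simp
    · rw [hid i j hij]
      simp [hij]
  · by_cases h2 : i = l ∧ j = k
    · obtain ⟨rfl, rfl⟩ := h2
      have hij : i ≠ j := fun h => h1 ⟨h, h.symm⟩
      rw [hflip i j hij]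
      simp [hij]
    · rw [hzero i j k l (by tauto)]
      simp [h1, h2]

/-! ### The twirl of the diagonal projection -/

theorem flipMat_mul_flipMat (d : ℕ) : flipMat d * flipMat d = 1 := by
  ext ⟨i, j⟩ ⟨k, l⟩
  rw [mul_flipMat_apply]
  simp [flipMat, Matrix.one_apply]

theorem flipMat_mul_diagProj (d : ℕ) : flipMat d * diagProj d = diagProj d := by
  ext ⟨i, j⟩ ⟨k, l⟩
  rw [flipMat_mul_apply]
  simp only [diagProj, Prod.swap_prod_mk, Prod.mk.injEq]
  by_cases h : i = j
  · subst h; rfl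
  · simp [h, Ne.symm h]

theorem diagProj_mul_flipMat (d : ℕ) : diagProj d * flipMat d = diagProj d := by
  ext ⟨i, j⟩ ⟨k, l⟩
  rw [diagProj_mul_apply]
  simp only [diagProj, flipMat, Prod.mk.injEq]
  by_cases h : i = j
  · subst h; simp [and_comm]
  · simp [h]

theorem diagProj_mul_diagProj (d : ℕ) : diagProj d * diagProj d = diagProj d := by
  ext p q
  rw [diagProj_mul_apply]
  simp only [diagProj]
  by_cases h : p.1 = p.2 <;> simp [h]

theorem trace_diagProj (d : ℕ) : trace (diagProj d) = d := by
  simp only [trace, diag_apply, Fintype.sum_prod_type]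
  simp [diagProj]

theorem trace_flipMat (d : ℕ) : trace (flipMat d) = d := by
  simp only [trace, diag_apply, Fintype.sum_prod_type]
  simp only [flipMat, show ∀ i j : Fin d, (i = j ∧ j = i) ↔ i = j from fun i j => by grind]
  simp

theorem trace_diagProj_mul_conj2_diagProj {d : ℕ} (A : Matrix (Fin d) (Fin d) ℂ) :
    trace (diagProj d * conj2 A (diagProj d))
      = ((∑ i, ∑ k, Complex.normSq (A i k) ^ 2 : ℝ) : ℂ) := by
  simp only [trace, diag_apply, diagProj_mul_apply, Fintype.sum_prod_type, conj2_apply,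
    Matrix.mul_apply (N := (A ⊗ₖ A)ᴴ), mul_diagProj_apply, ite_mul, zero_mul,
    Finset.sum_ite_eq, Finset.mem_univ, if_true, conjTranspose_apply, kroneckerMap_apply]
  push_cast
  refine Finset.sum_congr rfl fun i _ => Finset.sum_congr rfl fun k _ => ?_
  rw [Complex.normSq_eq_conj_mul_self, star_mul']
  simp only [RCLike.star_def]
  ring

theorem sum_normSq_conjTranspose {d : ℕ} (A : Matrix (Fin d) (Fin d) ℂ) :
    ∑ i, ∑ k, Complex.normSq (Aᴴ i k) ^ 2 = ∑ i, ∑ k, Complex.normSq (A i k) ^ 2 := by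
  rw [Finset.sum_comm]
  simp [conjTranspose_apply, Complex.normSq_conj]

theorem conjTranspose_mem {d : ℕ} {Q : Matrix (Fin d) (Fin d) ℂ}
    (hQ : Q ∈ Matrix.unitaryGroup (Fin d) ℂ) : Qᴴ ∈ Matrix.unitaryGroup (Fin d) ℂ :=
  Unitary.star_mem hQ

/-- With the stated fourth moment of the entries of `Q`, the twirl over the conjugated
group sends the diagonal projection into the span of the identity and the flip. It is stated before
the outer conjugation by `Q`, which fixes that span. The three coefficients of the twirl of
`diagProj` conjugated by `Qᴴ` are determined by its traces against `1`, the flip and `diagProj`,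
and the last coefficient vanishes. -/
theorem groupTwirl_conj2_diagProj {d : ℕ} (hd : 2 ≤ d) {Q : Matrix (Fin d) (Fin d) ℂ}
    (hQ : Q ∈ Matrix.unitaryGroup (Fin d) ℂ)
    (hQ4 : ∑ i, ∑ k, Complex.normSq (Q i k) ^ 2 = 2 * d / (d + 1)) :
    groupTwirl d (conj2 Qᴴ (diagProj d)) =
      (1 / (d + 1) : ℂ) • (1 + flipMat d : Matrix (Fin d × Fin d) (Fin d × Fin d) ℂ) := by
  have htr : ∀ X : Matrix (Fin d × Fin d) (Fin d × Fin d) ℂ,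
      (∀ σ α, (gmat σ α ⊗ₖ gmat σ α) * X = X * (gmat σ α ⊗ₖ gmat σ α)) →
      trace (X * groupTwirl d (conj2 Qᴴ (diagProj d))) = trace (X * conj2 Qᴴ (diagProj d)) :=
    fun X hX => map_groupTwirl_of_invariant
      (Matrix.traceLinearMap _ ℂ ℂ ∘ₗ LinearMap.mulLeft ℂ X) _
      fun σ α => trace_mul_conj2 (gmat_mem σ α) (hX σ α) _
  have t1 := htr 1 (fun _ _ => by simp)
  have t2 := htr (flipMat d) (fun _ _ => flipMat_comm _)
  have t3 := htr (diagProj d) diagProj_comm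
  obtain ⟨a, b, e, h⟩ := exists_coeffs_of_invariant hd
    (fun σ α => conj2_groupTwirl σ α (conj2 Qᴴ (diagProj d)))
  rw [trace_mul_conj2 (conjTranspose_mem hQ) (by simp), Matrix.one_mul, Matrix.one_mul, h,
    trace_diagProj] at t1
  rw [trace_mul_conj2 (conjTranspose_mem hQ) (flipMat_comm _), flipMat_mul_diagProj, h,
    trace_diagProj] at t2
  rw [trace_diagProj_mul_conj2_diagProj, sum_normSq_conjTranspose, hQ4, h] at t3
  simp only [Matrix.mul_add, Matrix.mul_smul, Matrix.mul_one, trace_add, trace_smul, trace_one,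
    trace_diagProj, trace_flipMat, flipMat_mul_flipMat, flipMat_mul_diagProj, smul_eq_mul,
    diagProj_mul_flipMat, diagProj_mul_diagProj, Fintype.card_prod, Fintype.card_fin] at t1 t2 t3
  push_cast at t1 t2 t3
  have hd0 : (d : ℂ) ≠ 0 := by exact_mod_cast (by omega : d ≠ 0)
  have hd1 : (d : ℂ) + 1 ≠ 0 := by exact_mod_cast Nat.succ_ne_zero d
  have hd2 : (d : ℂ) - 1 ≠ 0 := sub_ne_zero.mpr (by exact_mod_cast (by omega : d ≠ 1))
  have s1 : a * d + b + e = 1 := mul_left_cancel₀ hd0 (by linear_combination t1)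
  have s2 : a + b * d + e = 1 := mul_left_cancel₀ hd0 (by linear_combination t2)
  have s3 : a + b + e = 2 / (d + 1) := mul_left_cancel₀ hd0 (by linear_combination t3)
  have ha : a = 1 / (d + 1) := by
    refine mul_left_cancel₀ hd2 ?_
    rw [show ((d : ℂ) - 1) * a = 1 - 2 / (d + 1) by linear_combination s1 - s3]
    field_simp
    ring
  have hb : b = 1 / (d + 1) := by
    refine mul_left_cancel₀ hd2 ?_
    rw [show ((d : ℂ) - 1) * b = 1 - 2 / (d + 1) by linear_combination s2 - s3]
    field_simp
    ring
  have he : e = 0 := by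
    rw [ha, hb] at s3
    linear_combination s3
  rw [h, ha, hb, he, zero_smul, add_zero, smul_add]

/-! ### The Haar twirl -/

theorem integrable_conj2 {d : ℕ} (μ : Measure (Matrix.unitaryGroup (Fin d) ℂ))
    [IsProbabilityMeasure μ] (M : Matrix (Fin d × Fin d) (Fin d × Fin d) ℂ)
    (p q : Fin d × Fin d) :
    Integrable (fun U : Matrix.unitaryGroup (Fin d) ℂ =>
      conj2 (U : Matrix (Fin d) (Fin d) ℂ) M p q) μ := by
  refine Continuous.integrable_of_hasCompactSupport ?_ (HasCompactSupport.of_compactSpace _)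
  have hc : ∀ i j, Continuous fun U : Matrix.unitaryGroup (Fin d) ℂ =>
      (U : Matrix (Fin d) (Fin d) ℂ) i j :=
    fun i j => continuous_subtype_val.matrix_elem i j
  simp only [conj2_apply, Matrix.mul_apply, conjTranspose_apply, kroneckerMap_apply]
  exact continuous_finsetSum _ fun j _ =>
    (continuous_finsetSum _ fun k _ => ((hc _ _).mul (hc _ _)).mul continuous_const).mul
      ((hc _ _).mul (hc _ _)).star

/-- The twirl over the whole unitary group: the Haar average of conjugation by `U ⊗ U`. -/
noncomputable def haarTwirl {d : ℕ} (μ : Measure (Matrix.unitaryGroup (Fin d) ℂ))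
    [IsProbabilityMeasure μ] :
    Matrix (Fin d × Fin d) (Fin d × Fin d) ℂ →ₗ[ℂ] Matrix (Fin d × Fin d) (Fin d × Fin d) ℂ where
  toFun M := fun p q => ∫ U : Matrix.unitaryGroup (Fin d) ℂ,
    conj2 (U : Matrix (Fin d) (Fin d) ℂ) M p q ∂μ
  map_add' M N := by
    ext p q
    simp only [map_add, Matrix.add_apply]
    exact integral_add (integrable_conj2 μ M p q) (integrable_conj2 μ N p q)
  map_smul' c M := by
    ext p q
    simp only [map_smul, Matrix.smul_apply]
    exact integral_smul c _

theorem haarTwirl_apply {d : ℕ} (μ : Measure (Matrix.unitaryGroup (Fin d) ℂ))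
    [IsProbabilityMeasure μ] (M : Matrix (Fin d × Fin d) (Fin d × Fin d) ℂ)
    (p q : Fin d × Fin d) :
    haarTwirl μ M p q = ∫ U : Matrix.unitaryGroup (Fin d) ℂ,
      conj2 (U : Matrix (Fin d) (Fin d) ℂ) M p q ∂μ := rfl

theorem haarTwirl_conj2 {d : ℕ} (μ : Measure (Matrix.unitaryGroup (Fin d) ℂ))
    [μ.IsHaarMeasure] [IsProbabilityMeasure μ] {V : Matrix (Fin d) (Fin d) ℂ}
    (hV : V ∈ Matrix.unitaryGroup (Fin d) ℂ) (M : Matrix (Fin d × Fin d) (Fin d × Fin d) ℂ) :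
    haarTwirl μ (conj2 V M) = haarTwirl μ M := by
  ext p q
  rw [haarTwirl_apply, haarTwirl_apply]
  simp only [← conj2_mul]
  exact integral_mul_right_unitary μ
    (fun U => conj2 (U : Matrix (Fin d) (Fin d) ℂ) M p q) ⟨V, hV⟩

theorem haarTwirl_groupTwirl {d : ℕ} (μ : Measure (Matrix.unitaryGroup (Fin d) ℂ))
    [μ.IsHaarMeasure] [IsProbabilityMeasure μ]
    (M : Matrix (Fin d × Fin d) (Fin d × Fin d) ℂ) :
    haarTwirl μ (groupTwirl d M) = haarTwirl μ M :=
  map_groupTwirl_of_invariant _ _ fun σ α => haarTwirl_conj2 μ (gmat_mem σ α) M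

theorem haarTwirl_of_commute {d : ℕ} (μ : Measure (Matrix.unitaryGroup (Fin d) ℂ))
    [IsProbabilityMeasure μ] {X : Matrix (Fin d × Fin d) (Fin d × Fin d) ℂ}
    (hX : ∀ A : Matrix (Fin d) (Fin d) ℂ, (A ⊗ₖ A) * X = X * (A ⊗ₖ A)) :
    haarTwirl μ X = X := by
  ext p q
  simp only [haarTwirl_apply, fun U : Matrix.unitaryGroup (Fin d) ℂ => conj2_of_commute U.2 (hX U)]
  simp

/-- The two twirls compose to the Haar twirl once `Q` has the right fourth moment. -/
theorem double_twirl_eq_haarTwirl {d : ℕ} (hd : 2 ≤ d)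
    (μ : Measure (Matrix.unitaryGroup (Fin d) ℂ))
    [μ.IsHaarMeasure] [IsProbabilityMeasure μ] {Q : Matrix (Fin d) (Fin d) ℂ}
    (hQ : Q ∈ Matrix.unitaryGroup (Fin d) ℂ)
    (hQ4 : ∑ i, ∑ k, Complex.normSq (Q i k) ^ 2 = 2 * d / (d + 1))
    (M : Matrix (Fin d × Fin d) (Fin d × Fin d) ℂ) :
    conj2 Q (groupTwirl d (conj2 Qᴴ (groupTwirl d M))) = haarTwirl μ M := by
  have hone : ∀ A : Matrix (Fin d) (Fin d) ℂ,
      (A ⊗ₖ A) * (1 : Matrix (Fin d × Fin d) (Fin d × Fin d) ℂ) = 1 * (A ⊗ₖ A) := by simp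
  -- The outer twirl fixes everything that commutes with all `A ⊗ A`, as the Haar twirl does.
  have hfix : ∀ X : Matrix (Fin d × Fin d) (Fin d × Fin d) ℂ,
      (∀ A : Matrix (Fin d) (Fin d) ℂ, (A ⊗ₖ A) * X = X * (A ⊗ₖ A)) →
      conj2 Q (groupTwirl d (conj2 Qᴴ X)) = X := by
    intro X hX
    rw [conj2_of_commute (conjTranspose_mem hQ) (hX _)]
    have := map_groupTwirl_of_invariant LinearMap.id X
      fun σ α => conj2_of_commute (gmat_mem σ α) (hX _)
    rw [LinearMap.id_apply, LinearMap.id_apply] at this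
    rw [this, conj2_of_commute hQ (hX _)]
  have hD := groupTwirl_conj2_diagProj hd hQ hQ4
  have hDfix : ∀ A : Matrix (Fin d) (Fin d) ℂ,
      (A ⊗ₖ A) * ((1 / (d + 1) : ℂ) • (1 + flipMat d)) =
        ((1 / (d + 1) : ℂ) • (1 + flipMat d)) * (A ⊗ₖ A) := by
    intro A
    rw [Matrix.mul_smul, Matrix.smul_mul, Matrix.mul_add, Matrix.add_mul, hone, flipMat_comm]
  have hDH : haarTwirl μ (diagProj d) = (1 / (d + 1) : ℂ) • (1 + flipMat d) := by
    rw [← haarTwirl_conj2 μ (conjTranspose_mem hQ), ← haarTwirl_groupTwirl, hD,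
      haarTwirl_of_commute μ hDfix]
  obtain ⟨a, b, e, h⟩ := exists_coeffs_of_invariant hd (fun σ α => conj2_groupTwirl σ α M)
  rw [← haarTwirl_groupTwirl μ M, h]
  simp only [map_add, map_smul]
  rw [hfix 1 hone, hfix _ flipMat_comm, hD, conj2_of_commute hQ (hDfix Q),
    haarTwirl_of_commute μ hone, haarTwirl_of_commute μ flipMat_comm, hDH]

/-! ### The Hartley matrix and the fourth moment -/

/-- The sum of a nontrivial character of `ℤ/d` over the group vanishes, the trivial one sums
to `d`. -/
theorem sum_exp_mul {d : ℕ} (hd : d ≠ 0) (m : ℤ) :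
    ∑ k : Fin d, Complex.exp (((2 * π * m * k / d : ℝ) : ℂ) * Complex.I)
      = if (d : ℤ) ∣ m then (d : ℂ) else 0 := by
  have hprim := Complex.isPrimitiveRoot_exp d hd
  set w := Complex.exp (2 * π * Complex.I / d) with hw
  have hterm : ∀ k : Fin d, Complex.exp (((2 * π * m * k / d : ℝ) : ℂ) * Complex.I)
      = (w ^ m) ^ (k : ℕ) := by
    intro k
    rw [hw, ← Complex.exp_int_mul, ← Complex.exp_nat_mul]
    congr 1
    push_cast
    ring
  rw [Finset.sum_congr rfl fun k _ => hterm k, Fin.sum_univ_eq_sum_range (fun k => (w ^ m) ^ k)]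
  split_ifs with h
  · rw [(hprim.zpow_eq_one_iff_dvd m).mpr h]
    simp
  · have hne : w ^ m ≠ 1 := fun h1 => h ((hprim.zpow_eq_one_iff_dvd m).mp h1)
    have : (w ^ m) ^ d = 1 := by
      rw [← zpow_natCast, ← _root_.zpow_mul, mul_comm, _root_.zpow_mul, zpow_natCast, hprim.pow_eq_one, _root_.one_zpow]
    rw [geom_sum_eq hne, this, sub_self, zero_div]

theorem sum_cos_mul {d : ℕ} (hd : d ≠ 0) (m : ℤ) :
    ∑ k : Fin d, Real.cos (2 * π * m * k / d) = if (d : ℤ) ∣ m then (d : ℝ) else 0 := by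
  have h := congrArg Complex.re (sum_exp_mul hd m)
  simp only [Complex.re_sum, Complex.exp_ofReal_mul_I_re] at h
  rw [h]
  split_ifs <;> simp

theorem sum_sin_mul {d : ℕ} (hd : d ≠ 0) (m : ℤ) :
    ∑ k : Fin d, Real.sin (2 * π * m * k / d) = 0 := by
  have h := congrArg Complex.im (sum_exp_mul hd m)
  simp only [Complex.im_sum, Complex.exp_ofReal_mul_I_im] at h
  rw [h]
  split_ifs <;> simp

/-- The Hartley matrix: the real symmetric variant of the discrete Fourier matrix, with entries
`(cos x + sin x) / √d` for `x = 2πjk/d`. -/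
noncomputable def hartley (d : ℕ) (j k : Fin d) : ℝ :=
  (Real.cos (2 * π * j * k / d) + Real.sin (2 * π * j * k / d)) / √d

theorem hartley_symm {d : ℕ} (j k : Fin d) : hartley d j k = hartley d k j := by
  unfold hartley
  rw [show 2 * π * (j : ℝ) * k / d = 2 * π * k * j / d by ring]

/-- The Hartley matrix is an involution, by the identity
`cas x · cas y = cos (x - y) + sin (x + y)` for `cas = cos + sin`. -/
theorem hartley_mul_self {d : ℕ} (hd : d ≠ 0) (j l : Fin d) :
    ∑ k, hartley d j k * hartley d k l = if j = l then 1 else 0 := by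
  have hd' : (0 : ℝ) < d := by exact_mod_cast Nat.pos_of_ne_zero hd
  have hterm : ∀ k : Fin d, hartley d j k * hartley d k l
      = (Real.cos (2 * π * ((j : ℤ) - (l : ℤ) : ℤ) * k / d)
        + Real.sin (2 * π * ((j : ℤ) + (l : ℤ) : ℤ) * k / d)) / d := by
    intro k
    rw [hartley_symm k l, hartley, hartley, div_mul_div_comm, Real.mul_self_sqrt hd'.le]
    congr 1
    push_cast
    rw [show 2 * π * ((j : ℝ) - l) * k / d = 2 * π * j * k / d - 2 * π * l * k / d by ring,
      show 2 * π * ((j : ℝ) + l) * k / d = 2 * π * j * k / d + 2 * π * l * k / d by ring,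
      Real.cos_sub, Real.sin_add]
    ring
  rw [Finset.sum_congr rfl fun k _ => hterm k, ← Finset.sum_div, Finset.sum_add_distrib,
    sum_cos_mul hd, sum_sin_mul hd, add_zero]
  have hiff : (d : ℤ) ∣ (j : ℤ) - (l : ℤ) ↔ j = l := by
    constructor
    · intro h
      have := Int.eq_zero_of_abs_lt_dvd h (by rw [abs_lt]; omega)
      exact Fin.ext (by omega)
    · rintro rfl
      simp
  simp only [hiff]
  split_ifs
  · exact div_self hd'.ne'
  · exact zero_div _

/-- For `cas = cos + sin` one has `cas⁴ x = 1 + 2 sin 2x + (1 - cos 4x) / 2`, so character sums evaluate the fourth moment;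
the cosine contribution is at least its `j = 0` term. -/
theorem sum_hartley_pow_four_le {d : ℕ} (hd : d ≠ 0) :
    ∑ j, ∑ k, hartley d j k ^ 4 ≤ 1 + (1 - 1 / d) / 2 := by
  have hd' : (0 : ℝ) < d := by exact_mod_cast Nat.pos_of_ne_zero hd
  have hterm : ∀ j k : Fin d, hartley d j k ^ 4
      = (3 / 2 + 2 * Real.sin (2 * π * (2 * (j : ℤ) : ℤ) * k / d)
        - Real.cos (2 * π * (4 * (j : ℤ) : ℤ) * k / d) / 2) / d ^ 2 := by
    intro j k
    have hs : √(d : ℝ) ^ 4 = (d : ℝ) ^ 2 := by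
      rw [show (4 : ℕ) = 2 * 2 from rfl, pow_mul, Real.sq_sqrt hd'.le]
    rw [hartley, div_pow, hs]
    congr 1
    push_cast
    set x := 2 * π * (j : ℝ) * k / d with hx
    rw [show 2 * π * (2 * (j : ℝ)) * k / d = 2 * x by rw [hx]; ring,
      show 2 * π * (4 * (j : ℝ)) * k / d = 2 * (2 * x) by rw [hx]; ring,
      Real.cos_two_mul (2 * x), Real.cos_sq' (2 * x), Real.sin_two_mul]
    have h1 : (Real.cos x + Real.sin x) ^ 2 = 1 + 2 * Real.sin x * Real.cos x := by
      linear_combination Real.sin_sq_add_cos_sq x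
    rw [show (4 : ℕ) = 2 * 2 from rfl, pow_mul, h1]
    ring
  have hrow : ∀ j : Fin d, ∑ k, hartley d j k ^ 4
      = (3 / 2 * d - (if (d : ℤ) ∣ 4 * (j : ℤ) then (d : ℝ) else 0) / 2) / d ^ 2 := by
    intro j
    rw [Finset.sum_congr rfl fun k _ => hterm j k, ← Finset.sum_div, Finset.sum_sub_distrib,
      Finset.sum_add_distrib, ← Finset.mul_sum, sum_sin_mul hd,
      ← Finset.sum_div _ (fun k : Fin d => Real.cos (2 * π * (4 * (j : ℤ) : ℤ) * k / d)),
      sum_cos_mul hd]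
    simp [mul_comm]
  have hge : (d : ℝ) ≤ ∑ j : Fin d, if (d : ℤ) ∣ 4 * (j : ℤ) then (d : ℝ) else 0 := by
    have := Finset.single_le_sum (f := fun j : Fin d => if (d : ℤ) ∣ 4 * (j : ℤ) then (d : ℝ) else 0)
      (fun j _ => by positivity) (Finset.mem_univ ⟨0, Nat.pos_of_ne_zero hd⟩)
    simpa using this
  rw [Finset.sum_congr rfl fun j _ => hrow j, ← Finset.sum_div, Finset.sum_sub_distrib,
    ← Finset.sum_div, div_le_iff₀ (by positivity)]
  simp only [Finset.sum_const, Finset.card_univ, Fintype.card_fin, nsmul_eq_mul]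
  have : (1 + (1 - 1 / (d : ℝ)) / 2) * d ^ 2 = 3 / 2 * d ^ 2 - d / 2 := by
    field_simp
    ring
  rw [this]
  nlinarith

/-- The matrix `√(1-s) I + i √s H` with `H` the Hartley matrix. As `H` is a Hermitian involution, for
`s ∈ [0, 1]` this is a path inside the unitary group from the identity to `i H`. -/
noncomputable def hartleyPath (d : ℕ) (s : ℝ) : Matrix (Fin d) (Fin d) ℂ :=
  fun j k => ⟨√(1 - s) * if j = k then 1 else 0, √s * hartley d j k⟩

theorem normSq_hartleyPath {d : ℕ} {s : ℝ} (h0 : 0 ≤ s) (h1 : s ≤ 1) (j k : Fin d) :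
    Complex.normSq (hartleyPath d s j k) =
      (1 - s) * (if j = k then 1 else 0) + s * hartley d j k ^ 2 := by
  rw [hartleyPath, Complex.normSq_mk]
  have e1 := Real.mul_self_sqrt (sub_nonneg.mpr h1)
  have e2 := Real.mul_self_sqrt h0
  split_ifs
  · linear_combination e1 + hartley d j k ^ 2 * e2
  · linear_combination hartley d j k ^ 2 * e2

theorem hartleyPath_mem {d : ℕ} (hd : d ≠ 0) {s : ℝ} (h0 : 0 ≤ s) (h1 : s ≤ 1) :
    hartleyPath d s ∈ Matrix.unitaryGroup (Fin d) ℂ := by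
  have e1 := Real.mul_self_sqrt (sub_nonneg.mpr h1)
  have e2 := Real.mul_self_sqrt h0
  rw [mem_unitaryGroup_iff]
  ext j l
  have hH := hartley_mul_self hd j l
  rw [Matrix.mul_apply]
  apply Complex.ext
  · simp only [Complex.re_sum, star_apply, RCLike.star_def, Complex.mul_re, Complex.conj_re,
      Complex.conj_im, hartleyPath, mul_ite, ite_mul, mul_one, mul_zero, zero_mul]
    have : ∀ k, (√s * hartley d j k) * -(√s * hartley d l k)
        = -(s * (hartley d j k * hartley d k l)) := by
      intro k
      rw [hartley_symm l k]
      linear_combination -(hartley d j k * hartley d k l) * e2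
    simp only [this, sub_neg_eq_add, Finset.sum_add_distrib, ← Finset.mul_sum, hH, Matrix.one_apply]
    by_cases h : j = l
    · subst h
      simp [e1]
    · simp [h]
  · simp only [Complex.im_sum, star_apply, RCLike.star_def, Complex.mul_im, Complex.conj_re,
      Complex.conj_im, hartleyPath, mul_ite, ite_mul, mul_one, mul_zero, zero_mul,
      Finset.sum_add_distrib, Finset.sum_ite_eq, Finset.mem_univ, if_true, Matrix.one_apply]
    rw [hartley_symm l j]
    split_ifs <;> simp <;> ring

/-- Along the path from the identity to `i H` the fourth moment runs continuously from
`d` to a value at most `2d/(d+1)`. -/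
theorem exists_unitary_fourth_moment {d : ℕ} (hd : 2 ≤ d) :
    ∃ Q ∈ Matrix.unitaryGroup (Fin d) ℂ,
      ∑ i, ∑ k, Complex.normSq (Q i k) ^ 2 = 2 * d / (d + 1) := by
  have hd0 : d ≠ 0 := by omega
  have hd2 : (2 : ℝ) ≤ d := by exact_mod_cast hd
  let f : ℝ → ℝ := fun s => ∑ j : Fin d, ∑ k : Fin d,
    ((1 - s) * (if j = k then 1 else 0) + s * hartley d j k ^ 2) ^ 2
  have hf : ContinuousOn f (Set.Icc 0 1) := by
    apply Continuous.continuousOn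
    fun_prop
  have hf0 : f 0 = d := by simp [f]
  have hf1 : f 1 ≤ 2 * d / (d + 1) := by
    have e : f 1 = ∑ j, ∑ k, hartley d j k ^ 4 := by
      simp only [f, sub_self, zero_mul, zero_add, one_mul, ← pow_mul]
    rw [e]
    refine (sum_hartley_pow_four_le hd0).trans ?_
    rw [le_div_iff₀ (by positivity)]
    have h1 : (1 / (d : ℝ)) * d = 1 := by field_simp
    have h2 : 0 < 1 / (d : ℝ) := by positivity
    nlinarith
  have hf0' : 2 * d / (d + 1) ≤ f 0 := by
    rw [hf0, div_le_iff₀ (by positivity)]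
    nlinarith
  obtain ⟨s, ⟨h0, h1⟩, hs⟩ := intermediate_value_Icc' zero_le_one hf ⟨hf1, hf0'⟩
  refine ⟨hartleyPath d s, hartleyPath_mem hd0 h0 h1, ?_⟩
  simp only [normSq_hartleyPath h0 h1]
  exact hs

/-! ### The two-design -/

/-- In every dimension `d ≥ 2` there is a unitary `Q` such that the product
`G^Q · G` of the monomial group `G` (with product weights) forms a generalized
group unitary 2-design. -/
theorem exists_unitary_monomial_two_design (d : ℕ) (hd : 2 ≤ d)
    (μ : Measure (Matrix.unitaryGroup (Fin d) ℂ))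
    [μ.IsHaarMeasure] [IsProbabilityMeasure μ] :
    ∃ Q : Matrix (Fin d) (Fin d) ℂ, Q ∈ Matrix.unitaryGroup (Fin d) ℂ ∧
      ∀ (M : Matrix (Fin d × Fin d) (Fin d × Fin d) ℂ) (p q : Fin d × Fin d),
        (1 / ((Nat.factorial d : ℂ) * 3 ^ d)) ^ 2 *
          ∑ σ : Equiv.Perm (Fin d), ∑ α : Fin d → ZMod 3,
            ∑ σ' : Equiv.Perm (Fin d), ∑ α' : Fin d → ZMod 3,
              (((Q * gmat σ α * Qᴴ * gmat σ' α') ⊗ₖ (Q * gmat σ α * Qᴴ * gmat σ' α'))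
                * M *
                ((Q * gmat σ α * Qᴴ * gmat σ' α') ⊗ₖ (Q * gmat σ α * Qᴴ * gmat σ' α'))ᴴ) p q
          = ∫ U : Matrix.unitaryGroup (Fin d) ℂ,
              (((U : Matrix (Fin d) (Fin d) ℂ) ⊗ₖ (U : Matrix (Fin d) (Fin d) ℂ))
                * M *
                ((U : Matrix (Fin d) (Fin d) ℂ) ⊗ₖ (U : Matrix (Fin d) (Fin d) ℂ))ᴴ) p q ∂μ := by
  obtain ⟨Q, hQ, hQ4⟩ := exists_unitary_fourth_moment hd
  refine ⟨Q, hQ, fun M p q => ?_⟩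
  have h := congrFun (congrFun (double_twirl_eq_haarTwirl hd μ hQ hQ4 M) p) q
  rw [haarTwirl_apply] at h
  refine Eq.trans ?_ h
  -- Expanding the outer twirl first keeps the order of summation of the statement.
  rw [groupTwirl_apply (conj2 Qᴴ (groupTwirl d M))]
  simp only [← conj2_apply, map_smul, map_sum]
  simp only [groupTwirl_apply, map_smul, map_sum, ← conj2_mul, smul_smul,
    Finset.smul_sum, Finset.mul_sum]
  simp only [Matrix.sum_apply, Matrix.smul_apply, smul_eq_mul, Matrix.mul_assoc, sq]
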